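/- Let ρ be a density operator on ℂ^d with eigenvalue vector r, and let S be a closed set of probability vectors on d points not containing r. With P_X the sum of Schur–Weyl projectors P_λ over partitions λ of k with λ/k ∈ S, one has tr(P_X ρ^{⊗k}) ≤ (k+1)^{d(d+1)/2} exp(−k · min_{λ ⊢ k, λ̄ ∈ S} D(λ̄||r)). -/

import Mathlib

open Matrix Finset Nat ComplexOrder

noncomputable section

/-- The cells of the Young diagram of `lam` (rows indexed `0, …, d−1`). -/
def youngCells (d k : ℕ) (lam : ℕ → ℕ) : Finset (ℕ × ℕ) :=
  (range d ×ˢ range k).filter fun c => c.2 < lam c.1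

/-- The matrix of the action of the permutation `π ∈ S_k` on `(ℂ^d)^{⊗k}`, permuting
the tensor factors: basis vectors are indexed by functions `Fin k → Fin d`. -/
def permMat (d k : ℕ) (π : Equiv.Perm (Fin k)) :
    Matrix (Fin k → Fin d) (Fin k → Fin d) ℂ :=
  Matrix.of fun v w => if v = w ∘ ⇑π⁻¹ then 1 else 0

/-- The Young symmetry operator `e(T)` of a tableau, acting on `(ℂ^d)^{⊗k}`:
the signed sum over the column group times the sum over the row group, where the tableau is
given as a numbering `t : Fin k → ℕ × ℕ` of the boxes. -/
def youngSymMat (d k : ℕ) (t : Fin k → ℕ × ℕ) :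
    Matrix (Fin k → Fin d) (Fin k → Fin d) ℂ :=
  (∑ π ∈ univ.filter (fun π : Equiv.Perm (Fin k) => ∀ j, (t (π j)).2 = (t j).2),
      (((Equiv.Perm.sign π : ℤ) : ℂ) • permMat d k π)) *
    ∑ π ∈ univ.filter (fun π : Equiv.Perm (Fin k) => ∀ j, (t (π j)).1 = (t j).1),
      permMat d k π

/-- The `lam`-isotypic component `U_lam ⊗ V_lam` of `(ℂ^d)^{⊗k}` in the Schur–Weyl
decomposition: the span of the `S_k`-translates of the images of the Young symmetry
operators of tableaux of shape `lam`. -/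
def isotypic (d k : ℕ) (lam : ℕ → ℕ) : Submodule ℂ ((Fin k → Fin d) → ℂ) :=
  Submodule.span ℂ {x | ∃ t : Fin k → ℕ × ℕ,
    Set.BijOn t Set.univ ↑(youngCells d k lam) ∧
    ∃ (π : Equiv.Perm (Fin k)) (v : (Fin k → Fin d) → ℂ),
      x = (permMat d k π).mulVec ((youngSymMat d k t).mulVec v)}

/-- The `k`-fold tensor power `ρ^{⊗k}` of a matrix `ρ` on `ℂ^d`. -/
def tensorPow (d k : ℕ) (ρ : Matrix (Fin d) (Fin d) ℂ) :
    Matrix (Fin k → Fin d) (Fin k → Fin d) ℂ :=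
  Matrix.of fun v w => ∏ j, ρ (v j) (w j)

/-! ### Permutation action on tensors, viewed as functions of multi-indices -/

theorem permMat_mulVec_apply {d k : ℕ} (π : Equiv.Perm (Fin k)) (x : (Fin k → Fin d) → ℂ)
    (w : Fin k → Fin d) : (permMat d k π).mulVec x w = x (w ∘ ⇑π) := by
  have h : ∀ w' : Fin k → Fin d, (w = w' ∘ ⇑π⁻¹) ↔ (w ∘ ⇑π = w') := by
    intro w'
    constructor
    · rintro rfl; ext j; simp
    · rintro rfl; ext j; simp
  simp only [permMat, Matrix.mulVec, dotProduct, Matrix.of_apply, h]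
  simp

/-- Column antisymmetrizer. -/
def colOp {d k : ℕ} (c : Fin k → ℕ) : ((Fin k → Fin d) → ℂ) →ₗ[ℂ] ((Fin k → Fin d) → ℂ) where
  toFun x := fun w => ∑ π ∈ univ.filter (fun π : Equiv.Perm (Fin k) => ∀ j, c (π j) = c j),
    ((Equiv.Perm.sign π : ℤ) : ℂ) * x (w ∘ ⇑π)
  map_add' x y := by
    ext w; simp [mul_add, Finset.sum_add_distrib]
  map_smul' a x := by
    ext w; simp only [Pi.smul_apply, smul_eq_mul, RingHom.id_apply, Finset.mul_sum]
    exact Finset.sum_congr rfl fun _ _ => by ring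

/-- Row symmetrizer. -/
def rowOp {d k : ℕ} (c : Fin k → Fin d) : ((Fin k → Fin d) → ℂ) →ₗ[ℂ] ((Fin k → Fin d) → ℂ) where
  toFun x := fun w => ∑ π ∈ univ.filter (fun π : Equiv.Perm (Fin k) => ∀ j, c (π j) = c j),
    x (w ∘ ⇑π)
  map_add' x y := by
    ext w; simp [Finset.sum_add_distrib]
  map_smul' a x := by
    ext w; simp only [Pi.smul_apply, smul_eq_mul, RingHom.id_apply, Finset.mul_sum]

theorem colOp_apply {d k : ℕ} (c : Fin k → ℕ) (x : (Fin k → Fin d) → ℂ) (w : Fin k → Fin d) :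
    colOp c x w = ∑ π ∈ univ.filter (fun π : Equiv.Perm (Fin k) => ∀ j, c (π j) = c j),
      ((Equiv.Perm.sign π : ℤ) : ℂ) * x (w ∘ ⇑π) := rfl

theorem rowOp_apply {d k : ℕ} (c : Fin k → Fin d) (x : (Fin k → Fin d) → ℂ) (w : Fin k → Fin d) :
    rowOp c x w = ∑ π ∈ univ.filter (fun π : Equiv.Perm (Fin k) => ∀ j, c (π j) = c j),
      x (w ∘ ⇑π) := rfl

/-- A rank one row-symmetric tensor. -/
def mvec {d k : ℕ} (row : Fin k → Fin d) (x : Matrix (Fin d) (Fin d) ℂ) : (Fin k → Fin d) → ℂ :=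
  fun w => ∏ j, x (row j) (w j)

theorem youngSymMat_mulVec {d k : ℕ} (t : Fin k → ℕ × ℕ) (row : Fin k → Fin d)
    (hrow : ∀ j, (row j : ℕ) = (t j).1) (v : (Fin k → Fin d) → ℂ) :
    (youngSymMat d k t).mulVec v = colOp (fun j => (t j).2) (rowOp row v) := by
  have h : ∀ π : Equiv.Perm (Fin k), (∀ j, (t (π j)).1 = (t j).1) ↔ (∀ j, row (π j) = row j) := by
    intro π
    simp only [← hrow, Fin.val_inj]
  unfold youngSymMat
  simp only [h]
  rw [← Matrix.mulVec_mulVec]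
  ext w
  rw [Matrix.sum_mulVec, colOp_apply, Finset.sum_apply]
  refine Finset.sum_congr rfl fun π _ => ?_
  rw [Matrix.smul_mulVec, Pi.smul_apply, permMat_mulVec_apply, Matrix.sum_mulVec, rowOp_apply,
    Finset.sum_apply]
  simp only [permMat_mulVec_apply, smul_eq_mul]

/-- The antisymmetrized sum vanishes when two boxes of a column carry the same row index. -/
theorem alt_vanish {d k : ℕ} (col : Fin k → ℕ) (x : Matrix (Fin d) (Fin d) ℂ)
    (ρ w : Fin k → Fin d) (b b' : Fin k) (hb : b ≠ b') (hc : col b = col b') (hρ : ρ b = ρ b') :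
    ∑ σ ∈ univ.filter (fun π : Equiv.Perm (Fin k) => ∀ j, col (π j) = col j),
      ((Equiv.Perm.sign σ : ℤ) : ℂ) * ∏ j, x (ρ j) (w (σ j)) = 0 := by
  have hρs : ∀ j, ρ (Equiv.swap b b' j) = ρ j := by
    intro j
    by_cases h1 : j = b
    · subst h1; simp [hρ]
    · by_cases h2 : j = b'
      · subst h2; simp [hρ]
      · rw [Equiv.swap_apply_of_ne_of_ne h1 h2]
  have hcs : ∀ j, col (Equiv.swap b b' j) = col j := by
    intro j
    by_cases h1 : j = b
    · subst h1; simp [hc]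
    · by_cases h2 : j = b'
      · subst h2; simp [hc]
      · rw [Equiv.swap_apply_of_ne_of_ne h1 h2]
  have key : ∀ σ : Equiv.Perm (Fin k), ∏ j, x (ρ j) (w ((σ * Equiv.swap b b') j)) =
      ∏ j, x (ρ j) (w (σ j)) := by
    intro σ
    rw [← Equiv.prod_comp (Equiv.swap b b') (fun j => x (ρ j) (w (σ j)))]
    refine Finset.prod_congr rfl fun j _ => ?_
    rw [hρs j]; rfl
  refine Finset.sum_involution (fun σ _ => σ * Equiv.swap b b') ?_ ?_ ?_ ?_
  · intro σ _
    rw [key, Equiv.Perm.sign_mul, Equiv.Perm.sign_swap hb]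
    simp
  · intro σ _ _ h
    have : Equiv.swap b b' = 1 := by simpa using h
    have h2 := congrArg (fun e : Equiv.Perm (Fin k) => e b) this
    simp at h2
    exact hb h2.symm
  · intro σ hσ
    simp only [Finset.mem_filter, Finset.mem_univ, true_and] at hσ ⊢
    intro j
    rw [Equiv.Perm.mul_apply, hσ, hcs]
  · intro σ _
    simp [mul_assoc]

theorem colOp_mvec_lower {d k : ℕ} (row : Fin k → Fin d) (col : Fin k → ℕ)
    (hdown : ∀ j, ∀ m : Fin d, m < row j → ∃ j', row j' = m ∧ col j' = col j)
    (A x : Matrix (Fin d) (Fin d) ℂ) (hA : ∀ i a, i < a → A i a = 0) :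
    colOp col (mvec row (A * x)) = (∏ j, A (row j) (row j)) • colOp col (mvec row x) := by
  ext w
  simp only [colOp_apply, mvec, Pi.smul_apply, smul_eq_mul, Matrix.mul_apply, Function.comp]
  have h1 : ∀ σ : Equiv.Perm (Fin k), ∏ j, ∑ a, A (row j) a * x a (w (σ j)) =
      ∑ ρ : Fin k → Fin d, (∏ j, A (row j) (ρ j)) * ∏ j, x (ρ j) (w (σ j)) := by
    intro σ
    rw [Finset.prod_univ_sum]
    simp [Finset.prod_mul_distrib]
  simp only [h1, Finset.mul_sum]
  rw [Finset.sum_comm]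
  rw [Finset.sum_eq_single row]
  · exact Finset.sum_congr rfl fun _ _ => by ring
  · intro ρ _ hρ
    by_cases hle : ∃ j, row j < ρ j
    · obtain ⟨j, hj⟩ := hle
      have : ∏ j, A (row j) (ρ j) = 0 := Finset.prod_eq_zero (Finset.mem_univ j) (hA _ _ hj)
      simp [this]
    · push Not at hle
      have hex : ∃ b b', b ≠ b' ∧ col b = col b' ∧ ρ b = ρ b' := by
        by_contra hno
        push Not at hno
        apply hρ
        have : ∀ n : ℕ, ∀ j, (row j : ℕ) = n → ρ j = row j := by
          intro n
          induction n using Nat.strong_induction_on with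
          | _ n ih =>
            intro j hj
            by_contra hne
            have hlt : ρ j < row j := lt_of_le_of_ne (hle j) hne
            obtain ⟨j', hj', hc'⟩ := hdown j (ρ j) hlt
            have := ih (ρ j) (by rw [← hj]; exact hlt) j' (by rw [hj'])
            refine hno j' j ?_ hc' (by rw [this, hj'])
            rintro rfl
            exact hne hj'.symm
        ext j
        rw [this _ j rfl]
      obtain ⟨b, b', hb, hc, hr⟩ := hex
      have := alt_vanish col x ρ w b b' hb hc hr
      calc _ = (∏ j, A (row j) (ρ j)) * ∑ σ ∈ univ.filter
            (fun π : Equiv.Perm (Fin k) => ∀ j, col (π j) = col j),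
            ((Equiv.Perm.sign σ : ℤ) : ℂ) * ∏ j, x (ρ j) (w (σ j)) := by
              rw [Finset.mul_sum]
              exact Finset.sum_congr rfl fun _ _ => by ring
        _ = 0 := by rw [this, mul_zero]
  · simp

/-- Elimination: everything is in the span of the unipotent upper triangular values. -/
theorem colOp_mvec_mem {d k : ℕ} (row : Fin k → Fin d) (col : Fin k → ℕ)
    (hdown : ∀ j, ∀ m : Fin d, m < row j → ∃ j', row j' = m ∧ col j' = col j)
    (Q : Submodule ℂ ((Fin k → Fin d) → ℂ))
    (hQ : ∀ x : Matrix (Fin d) (Fin d) ℂ, (∀ i a, a < i → x i a = 0) → (∀ i, x i i = 1) →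
      colOp col (mvec row x) ∈ Q) (x : Matrix (Fin d) (Fin d) ℂ) :
    colOp col (mvec row x) ∈ Q := by
  have main : ∀ n : ℕ, n ≤ d → ∀ x : Matrix (Fin d) (Fin d) ℂ,
      (∀ a : Fin d, (a : ℕ) < d - n → x a a = 1 ∧ ∀ i, a < i → x i a = 0) →
      colOp col (mvec row x) ∈ Q := by
    intro n
    induction n with
    | zero =>
      intro _ x hx
      refine hQ x (fun i a h => (hx a (by have := a.2; omega)).2 i h)
        (fun i => (hx i (by have := i.2; omega)).1)
    | succ n ih =>
      intro hn x hx
      have hclt : d - (n + 1) < d := by omega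
      set c : Fin d := ⟨d - (n + 1), hclt⟩ with hc
      -- the case of a nonzero pivot
      have step : ∀ y : Matrix (Fin d) (Fin d) ℂ, y c c ≠ 0 →
          (∀ a : Fin d, a < c → y a a = 1 ∧ ∀ i, a < i → y i a = 0) →
          colOp col (mvec row y) ∈ Q := by
        intro y hyc hy
        let A : Matrix (Fin d) (Fin d) ℂ := Matrix.of fun i a =>
          if i = a then (if i = c then y c c else 1) else if a = c ∧ c < i then y i c else 0
        let z : Matrix (Fin d) (Fin d) ℂ := Matrix.of fun i a =>
          if i = c then y c a / y c c else if c < i then y i a - y i c * (y c a / y c c) else y i a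
        have hAz : A * z = y := by
          ext i a
          rw [Matrix.mul_apply]
          by_cases hic : c < i
          · have hne : i ≠ c := ne_of_gt hic
            rw [Finset.sum_eq_add i c hne]
            · simp [A, z, hne, hic]
            · intro b _ hb
              simp [A, hb.1.symm, hb.2]
            · simp
            · simp
          · rw [Finset.sum_eq_single i]
            · by_cases h : i = c
              · subst h; simp [A, z]; field_simp
              · simp [A, z, h, hic]
            · intro b _ hb
              simp [A, hb.symm, hic]
            · simp
        have hz : colOp col (mvec row z) ∈ Q := by
          apply ih (by omega)
          intro a ha
          have hac : a ≤ c := by rw [Fin.le_def]; simp [hc]; omega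
          rcases hac.eq_or_lt with h | h
          · subst h
            refine ⟨by simp [z, hyc], fun i hi => ?_⟩
            simp [z, hi, ne_of_gt hi, hyc]
          · have h0 := hy a h
            have hca : y c a = 0 := h0.2 c h
            refine ⟨by simp [z, h.ne, not_lt_of_gt h, h0.1], fun i hi => ?_⟩
            simp [z, hca, h0.2 i hi]
        rw [← hAz, colOp_mvec_lower row col hdown A z]
        · exact Q.smul_mem _ hz
        · intro i a hia
          simp only [A, Matrix.of_apply, hia.ne, if_false, ite_eq_right_iff, and_imp]
          intro h1 h2
          subst h1
          exact absurd h2 (not_lt_of_gt hia)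
      have hx' : ∀ a : Fin d, a < c → x a a = 1 ∧ ∀ i, a < i → x i a = 0 := fun a ha => hx a ha
      by_cases hxc : x c c = 0
      · -- perturb and pass to the limit
        let y : ℂ → Matrix (Fin d) (Fin d) ℂ := fun s => Matrix.of fun i a =>
          x i a + if i = c ∧ a = c then s else 0
        have hcont : Continuous fun s => colOp col (mvec row (y s)) := by
          refine continuous_pi fun w => ?_
          simp only [colOp_apply, mvec, y, Matrix.of_apply]
          refine continuous_finsetSum _ fun σ _ => continuous_const.mul
            (continuous_finsetProd _ fun j _ => continuous_const.add ?_)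
          split_ifs
          · exact continuous_id
          · exact continuous_const
        have hclosed : IsClosed ((fun s => colOp col (mvec row (y s))) ⁻¹' (Q : Set _)) :=
          (Submodule.closed_of_finiteDimensional Q).preimage hcont
        have hsub : ({0}ᶜ : Set ℂ) ⊆ (fun s => colOp col (mvec row (y s))) ⁻¹' (Q : Set _) := by
          intro s hs
          apply step
          · simpa [y, hxc] using hs
          · intro a ha
            have h0 := hx' a ha
            refine ⟨by simp [y, h0.1, ha.ne], fun i hi => ?_⟩
            simp [y, h0.2 i hi, ha.ne]
        have h0 : (0 : ℂ) ∈ closure ({0}ᶜ : Set ℂ) := by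
          rw [(dense_compl_singleton (0 : ℂ)).closure_eq]; trivial
        have := (closure_minimal hsub hclosed) h0
        have hy0 : y 0 = x := by ext i a; simp [y]
        simpa [hy0] using this
      · exact step x hxc hx'
  exact main d le_rfl x (fun a ha => by omega)

theorem exists_perm_of_sum_single {k : ℕ} {α : Type*} [DecidableEq α] (f g : Fin k → α)
    (h : ∑ j, Finsupp.single (f j) 1 = ∑ j, Finsupp.single (g j) (1 : ℕ)) :
    ∃ e : Equiv.Perm (Fin k), ∀ j, g (e j) = f j := by
  have hc : ∀ c, Nonempty ({a // f a = c} ≃ {b // g b = c}) := by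
    intro c
    refine ⟨Fintype.equivOfCardEq ?_⟩
    have := DFunLike.congr_fun h c
    simp only [Finsupp.coe_finsetSum, Finset.sum_apply, Finsupp.single_apply] at this
    rw [Fintype.card_subtype, Fintype.card_subtype, Finset.card_filter, Finset.card_filter]
    exact this
  exact ⟨Equiv.ofFiberEquiv fun c => (hc c).some, fun j => Equiv.ofFiberEquiv_map _ j⟩

theorem rowOp_single_perm {d k : ℕ} (row : Fin k → Fin d) (w : Fin k → Fin d)
    (e : Equiv.Perm (Fin k)) (he : ∀ j, row (e j) = row j) :
    rowOp row (Pi.single (w ∘ e) (1 : ℂ)) = rowOp row (Pi.single w (1 : ℂ)) := by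
  ext u
  rw [rowOp_apply, rowOp_apply]
  refine Finset.sum_bij' (fun τ _ => τ * e⁻¹) (fun τ _ => τ * e) ?_ ?_ ?_ ?_ ?_
  · intro τ hτ
    simp only [Finset.mem_filter, Finset.mem_univ, true_and] at hτ ⊢
    intro j
    rw [Equiv.Perm.mul_apply, hτ, ← he (e⁻¹ j)]
    simp
  · intro τ hτ
    simp only [Finset.mem_filter, Finset.mem_univ, true_and] at hτ ⊢
    intro j
    rw [Equiv.Perm.mul_apply, hτ, he]
  · intro τ _; simp
  · intro τ _; simp
  · intro τ _
    simp only [Pi.single_apply]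
    congr 1
    apply propext
    constructor
    · intro h
      funext j
      have := congrFun h (e⁻¹ j)
      simpa using this
    · intro h
      funext j
      have := congrFun h (e j)
      simpa using this

theorem rowOp_mvec {d k : ℕ} (row : Fin k → Fin d) (x : Matrix (Fin d) (Fin d) ℂ) :
    ∃ c : ℂ, rowOp row (mvec row x) = c • mvec row x := by
  refine ⟨((univ.filter (fun π : Equiv.Perm (Fin k) => ∀ j, row (π j) = row j)).card : ℂ), ?_⟩
  ext w
  rw [rowOp_apply, Pi.smul_apply, smul_eq_mul, ← nsmul_eq_mul]
  apply Finset.sum_eq_card_nsmul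
  intro π hπ
  simp only [Finset.mem_filter, Finset.mem_univ, true_and] at hπ
  simp only [mvec, Function.comp]
  rw [← Equiv.prod_comp π (fun j => x (row j) (w j))]
  simp [hπ]

/-- Polarization: symmetrized tensors lie in the span of the rank one ones. -/
theorem rowOp_mem {d k : ℕ} (row : Fin k → Fin d) (Q : Submodule ℂ ((Fin k → Fin d) → ℂ))
    (hQ : ∀ x, mvec row x ∈ Q) (z : (Fin k → Fin d) → ℂ) : rowOp row z ∈ Q := by
  classical
  by_contra hz
  obtain ⟨phi, hphiz, hphi⟩ := Submodule.exists_le_ker_of_notMem hz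
  apply hphiz
  set psi := phi ∘ₗ rowOp row with hpsi
  have hpsix : ∀ x, psi (mvec row x) = 0 := by
    intro x
    obtain ⟨c, hc⟩ := rowOp_mvec row x
    have h0 : phi (mvec row x) = 0 := hphi (hQ x)
    simp [hpsi, hc, h0]
  have hexp : ∀ y : (Fin k → Fin d) → ℂ, psi y = ∑ w, y w * psi (Pi.single w 1) := by
    intro y
    conv_lhs => rw [← Finset.univ_sum_single y]
    rw [map_sum]
    refine Finset.sum_congr rfl fun w _ => ?_
    rw [← smul_eq_mul, ← map_smul]
    congr 1
    ext u
    simp [Pi.single_apply]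
  let ex : (Fin k → Fin d) → (Fin d × Fin d →₀ ℕ) := fun w => ∑ j, Finsupp.single (row j, w j) 1
  let p : MvPolynomial (Fin d × Fin d) ℂ :=
    ∑ w, MvPolynomial.monomial (ex w) (psi (Pi.single w 1))
  have hp : p = 0 := by
    apply MvPolynomial.funext
    intro y
    have := hpsix (Matrix.of fun i a => y (i, a))
    rw [hexp] at this
    simp only [p, map_sum, MvPolynomial.eval_monomial, map_zero]
    rw [← this]
    refine Finset.sum_congr rfl fun w _ => ?_
    rw [mul_comm]
    congr 1
    simp only [ex, mvec, Matrix.of_apply]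
    rw [← Finsupp.prod_finsetSum_index (by simp) (by intro a b c; rw [pow_add])]
    simp
  have hzero : ∀ w0, psi (Pi.single w0 1) = 0 := by
    intro w0
    have h1 := congrArg (MvPolynomial.coeff (ex w0)) hp
    simp only [p, MvPolynomial.coeff_sum, MvPolynomial.coeff_monomial, MvPolynomial.coeff_zero] at h1
    have h2 : ∀ w, (if ex w = ex w0 then psi (Pi.single w 1) else 0) =
        (if ex w = ex w0 then (1 : ℂ) else 0) * psi (Pi.single w0 1) := by
      intro w
      split_ifs with h
      · obtain ⟨e, he⟩ := exists_perm_of_sum_single _ _ h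
        simp only [Prod.mk.injEq] at he
        have hw : w = w0 ∘ e := by funext j; exact (he j).2.symm
        rw [one_mul, hw, hpsi, LinearMap.comp_apply, LinearMap.comp_apply,
          rowOp_single_perm row w0 e (fun j => (he j).1)]
      · simp
    simp only [h2] at h1
    rw [← Finset.sum_mul, Finset.sum_boole] at h1
    rcases mul_eq_zero.mp h1 with h | h
    · exfalso
      have : (univ.filter fun w => ex w = ex w0).card = 0 := by exact_mod_cast h
      rw [Finset.card_eq_zero] at this
      have h3 : w0 ∈ (univ.filter fun w => ex w = ex w0) := by simp
      rw [this] at h3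
      simp at h3
    · exact h
  have := hexp z
  simp only [hzero, mul_zero, Finset.sum_const_zero] at this
  exact this

theorem card_pairs (d : ℕ) : Fintype.card {p : Fin d × Fin d // p.1 < p.2} = d * (d - 1) / 2 := by
  rw [Fintype.card_subtype, Finset.card_filter, Fintype.sum_prod_type_right]
  have : ∀ a : Fin d, (∑ i : Fin d, if i < a then 1 else 0) = (a : ℕ) := by
    intro a
    rw [← Finset.card_filter]
    have : (univ.filter fun i : Fin d => i < a) = Finset.Iio a := by ext; simp
    rw [this, Fin.card_Iio]
  simp only [this]
  rw [Fin.sum_univ_eq_sum_range (fun i => i) d, Finset.sum_range_id]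

theorem upper_span {d k : ℕ} (row : Fin k → Fin d) :
    ∃ u : ({p : Fin d × Fin d // p.1 < p.2} → Fin (k + 1)) → ((Fin k → Fin d) → ℂ),
      ∀ x : Matrix (Fin d) (Fin d) ℂ, (∀ i a, a < i → x i a = 0) → (∀ i, x i i = 1) →
        mvec row x ∈ Submodule.span ℂ (Set.range u) := by
  classical
  let N : (Fin k → Fin d) → {p : Fin d × Fin d // p.1 < p.2} → Fin (k + 1) := fun w p =>
    ⟨(univ.filter fun j => (row j, w j) = p.1).card, by
      have := Finset.card_le_univ (univ.filter fun j => (row j, w j) = p.1)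
      simp only [Fintype.card_fin] at this
      omega⟩
  let u : ({p : Fin d × Fin d // p.1 < p.2} → Fin (k + 1)) → ((Fin k → Fin d) → ℂ) := fun n w =>
    if (∀ j, row j ≤ w j) ∧ N w = n then 1 else 0
  refine ⟨u, fun x hx hx1 => ?_⟩
  have : mvec row x = ∑ n, (∏ p : {p : Fin d × Fin d // p.1 < p.2},
      x p.1.1 p.1.2 ^ (n p : ℕ)) • u n := by
    ext w
    simp only [Finset.sum_apply, Pi.smul_apply, smul_eq_mul, u]
    by_cases hw : ∀ j, row j ≤ w j
    · simp only [hw, implies_true, true_and, mul_ite, mul_one, mul_zero, Finset.sum_ite_eq,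
        Finset.mem_univ, if_true]
      have h1 : mvec row x w = ∏ c : Fin d × Fin d,
          x c.1 c.2 ^ (univ.filter fun j => (row j, w j) = c).card := by
        rw [mvec, ← Finset.prod_fiberwise univ (fun j => (row j, w j))]
        refine Finset.prod_congr rfl fun c _ => ?_
        rw [Finset.prod_eq_pow_card]
        intro j hj
        simp only [Finset.mem_filter, Finset.mem_univ, true_and] at hj
        rw [← hj]
      rw [h1]
      rw [← Finset.prod_filter_of_ne (p := fun c : Fin d × Fin d => c.1 < c.2)]
      · rw [← Finset.prod_subtype_eq_prod_filter]
        simp [N]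
      · rintro ⟨i, a⟩ _ hne
        by_contra hlt
        apply hne
        simp only [not_lt] at hlt
        rcases hlt.eq_or_lt with h | h
        · simp only [h, hx1, one_pow]
        · have : (univ.filter fun j => (row j, w j) = (i, a)) = ∅ := by
            ext j
            simp only [Finset.mem_filter, Finset.mem_univ, true_and, Prod.mk.injEq,
              Finset.notMem_empty, iff_false, not_and]
            rintro rfl rfl
            exact absurd h (not_lt_of_ge (hw j))
          rw [this]; simp
    · simp only [hw, false_and, if_false, mul_zero, Finset.sum_const_zero]
      push Not at hw
      obtain ⟨j, hj⟩ := hw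
      exact Finset.prod_eq_zero (Finset.mem_univ j) (hx _ _ hj)
  rw [this]
  exact Submodule.sum_mem _ fun n _ => Submodule.smul_mem _ _
    (Submodule.subset_span (Set.mem_range_self n))

/-- Dimension bound for the image of a Young symmetrizer. -/
theorem finrank_young_le {d k : ℕ} (row : Fin k → Fin d) (col : Fin k → ℕ)
    (hdown : ∀ j, ∀ m : Fin d, m < row j → ∃ j', row j' = m ∧ col j' = col j) :
    Module.finrank ℂ (LinearMap.range (colOp (d := d) col ∘ₗ rowOp row)) ≤
      (k + 1) ^ (d * (d - 1) / 2) := by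
  obtain ⟨u, hu⟩ := upper_span (k := k) row
  set Q : Submodule ℂ ((Fin k → Fin d) → ℂ) :=
    Submodule.span ℂ (Set.range (fun n => colOp col (u n))) with hQdef
  have hmap : Submodule.map (colOp col) (Submodule.span ℂ (Set.range u)) = Q := by
    rw [Submodule.map_span, hQdef, ← Set.range_comp]; rfl
  have h1 : ∀ x, colOp col (mvec row x) ∈ Q := by
    apply colOp_mvec_mem row col hdown Q
    intro x hx hx1
    rw [← hmap]
    exact Submodule.mem_map_of_mem (hu x hx hx1)
  have h2 : LinearMap.range (colOp (d := d) col ∘ₗ rowOp row) ≤ Q := by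
    rintro _ ⟨z, rfl⟩
    exact rowOp_mem row (Q.comap (colOp col)) h1 z
  refine (Submodule.finrank_mono h2).trans ((finrank_range_le_card _).trans ?_)
  rw [Fintype.card_fun, card_pairs, Fintype.card_fin]

/-- The permutation action. -/
def act {d k : ℕ} (π : Equiv.Perm (Fin k)) : ((Fin k → Fin d) → ℂ) →ₗ[ℂ] ((Fin k → Fin d) → ℂ) :=
  LinearMap.funLeft ℂ ℂ (fun w => w ∘ ⇑π)

theorem act_apply {d k : ℕ} (π : Equiv.Perm (Fin k)) (x : (Fin k → Fin d) → ℂ)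
    (w : Fin k → Fin d) : act π x w = x (w ∘ ⇑π) := rfl

theorem act_mul {d k : ℕ} (π σ : Equiv.Perm (Fin k)) (x : (Fin k → Fin d) → ℂ) :
    act π (act σ x) = act (π * σ) x := by
  ext w; rfl

theorem permMat_mulVec {d k : ℕ} (π : Equiv.Perm (Fin k)) (x : (Fin k → Fin d) → ℂ) :
    (permMat d k π).mulVec x = act π x := by
  ext w; rw [permMat_mulVec_apply, act_apply]

theorem colOp_eq_sum {d k : ℕ} (c : Fin k → ℕ) (x : (Fin k → Fin d) → ℂ) :
    colOp c x = ∑ π ∈ univ.filter (fun π : Equiv.Perm (Fin k) => ∀ j, c (π j) = c j),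
      ((Equiv.Perm.sign π : ℤ) : ℂ) • act π x := by
  ext w; simp [colOp_apply, act_apply]

theorem colOp_conj {d k : ℕ} (c : Fin k → ℕ) (e : Equiv.Perm (Fin k))
    (x : (Fin k → Fin d) → ℂ) : colOp (c ∘ e) x = act e⁻¹ (colOp c (act e x)) := by
  ext w
  rw [act_apply, colOp_apply, colOp_apply]
  refine Finset.sum_bij' (fun τ _ => e * τ * e⁻¹) (fun τ _ => e⁻¹ * τ * e) ?_ ?_ ?_ ?_ ?_
  · intro τ hτ
    simp only [Finset.mem_filter, Finset.mem_univ, true_and, Function.comp] at hτ ⊢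
    intro j
    have := hτ (e⁻¹ j)
    simpa using this
  · intro τ hτ
    simp only [Finset.mem_filter, Finset.mem_univ, true_and, Function.comp] at hτ ⊢
    intro j
    have := hτ (e j)
    simpa using this
  · intro τ _; simp [mul_assoc]
  · intro τ _; simp [mul_assoc]
  · intro τ _
    rw [act_apply]
    congr 1
    · have : Equiv.Perm.sign (e * τ * e⁻¹) = Equiv.Perm.sign τ := by
        rw [Equiv.Perm.sign_mul, Equiv.Perm.sign_mul, Equiv.Perm.sign_inv, mul_right_comm,
          Int.units_mul_self, one_mul]
      rw [this]
    · congr 1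
      funext j
      simp

theorem rowOp_conj {d k : ℕ} (c : Fin k → Fin d) (e : Equiv.Perm (Fin k))
    (x : (Fin k → Fin d) → ℂ) : rowOp (c ∘ e) x = act e⁻¹ (rowOp c (act e x)) := by
  ext w
  rw [act_apply, rowOp_apply, rowOp_apply]
  refine Finset.sum_bij' (fun τ _ => e * τ * e⁻¹) (fun τ _ => e⁻¹ * τ * e) ?_ ?_ ?_ ?_ ?_
  · intro τ hτ
    simp only [Finset.mem_filter, Finset.mem_univ, true_and, Function.comp] at hτ ⊢
    intro j
    have := hτ (e⁻¹ j)
    simpa using this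
  · intro τ hτ
    simp only [Finset.mem_filter, Finset.mem_univ, true_and, Function.comp] at hτ ⊢
    intro j
    have := hτ (e j)
    simpa using this
  · intro τ _; simp [mul_assoc]
  · intro τ _; simp [mul_assoc]
  · intro τ _
    rw [act_apply]
    congr 1
    funext j
    simp

theorem act_rowOp_congr {d k : ℕ} (row : Fin k → Fin d) (π σ : Equiv.Perm (Fin k))
    (h : row ∘ ⇑π⁻¹ = row ∘ ⇑σ⁻¹) (x : (Fin k → Fin d) → ℂ) :
    act π (rowOp row x) = act σ (rowOp row x) := by
  have h1 : ∀ j, row (σ⁻¹ (π j)) = row j := by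
    intro j
    have := congrFun h (π j)
    simpa using this.symm
  have h2 : ∀ j, row (π⁻¹ (σ j)) = row j := by
    intro j
    have := congrFun h (σ j)
    simpa using this
  ext w
  rw [act_apply, act_apply, rowOp_apply, rowOp_apply]
  refine Finset.sum_bij' (fun τ _ => σ⁻¹ * π * τ) (fun τ _ => π⁻¹ * σ * τ) ?_ ?_ ?_ ?_ ?_
  · intro τ hτ
    simp only [Finset.mem_filter, Finset.mem_univ, true_and] at hτ ⊢
    intro j
    rw [Equiv.Perm.mul_apply, Equiv.Perm.mul_apply, h1, hτ]
  · intro τ hτ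
    simp only [Finset.mem_filter, Finset.mem_univ, true_and] at hτ ⊢
    intro j
    rw [Equiv.Perm.mul_apply, Equiv.Perm.mul_apply, h2, hτ]
  · intro τ _; simp [mul_assoc]
  · intro τ _; simp [mul_assoc]
  · intro τ _
    congr 1
    funext j
    simp

/-- The arrangements of the row word. -/
def rowWords {d k : ℕ} (row : Fin k → Fin d) : Finset (Fin k → Fin d) :=
  univ.image (fun π : Equiv.Perm (Fin k) => row ∘ ⇑π⁻¹)

theorem finrank_orbit_le {d k : ℕ} (row : Fin k → Fin d) (col : Fin k → ℕ)
    (W : Submodule ℂ ((Fin k → Fin d) → ℂ))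
    (hW : W ≤ Submodule.span ℂ {x | ∃ (π : Equiv.Perm (Fin k)) (v : (Fin k → Fin d) → ℂ),
      x = act π (colOp col (rowOp row v))}) :
    Module.finrank ℂ W ≤
      Module.finrank ℂ (LinearMap.range (colOp (d := d) col ∘ₗ rowOp row)) *
        (rowWords row).card := by
  set E := colOp (d := d) col ∘ₗ rowOp row with hE
  let b := Module.finBasis ℂ (LinearMap.range E)
  have hv : ∀ i, ∃ v, E v = b i := fun i => (b i).2
  choose v hv using hv
  have hp : ∀ f : rowWords row, ∃ π : Equiv.Perm (Fin k), row ∘ ⇑π⁻¹ = f.1 := by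
    intro f
    have := f.2
    simpa only [rowWords, Finset.mem_image, Finset.mem_univ, true_and] using this
  choose p hp using hp
  let u : Fin (Module.finrank ℂ (LinearMap.range E)) × rowWords row → ((Fin k → Fin d) → ℂ) :=
    fun q => act (p q.2) (rowOp row (v q.1))
  have h0 : ∀ (π : Equiv.Perm (Fin k)) i, act π (rowOp row (v i)) ∈
      Submodule.span ℂ (Set.range u) := by
    intro π i
    have hm : row ∘ ⇑π⁻¹ ∈ rowWords row := Finset.mem_image_of_mem _ (Finset.mem_univ π)
    rw [act_rowOp_congr row π (p ⟨_, hm⟩) (hp ⟨_, hm⟩).symm]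
    exact Submodule.subset_span ⟨(i, ⟨_, hm⟩), rfl⟩
  have h1 : W ≤ Submodule.span ℂ (Set.range u) := by
    refine hW.trans (Submodule.span_le.mpr ?_)
    rintro _ ⟨π, y, rfl⟩
    have hy : E y = ∑ i, b.repr ⟨E y, LinearMap.mem_range_self E y⟩ i • E (v i) := by
      have := congrArg Subtype.val (b.sum_repr ⟨E y, LinearMap.mem_range_self E y⟩)
      refine this.symm.trans ?_
      rw [Submodule.coe_sum]
      simp only [Submodule.coe_smul, hv]
    change act π (E y) ∈ Submodule.span ℂ (Set.range u)
    rw [hy, map_sum]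
    refine Submodule.sum_mem _ fun i _ => ?_
    rw [map_smul]
    refine Submodule.smul_mem _ _ ?_
    change act π (colOp col (rowOp row (v i))) ∈ Submodule.span ℂ (Set.range u)
    rw [colOp_eq_sum, map_sum]
    refine Submodule.sum_mem _ fun σ _ => ?_
    rw [map_smul, act_mul]
    exact Submodule.smul_mem _ _ (h0 _ _)
  refine (Submodule.finrank_mono h1).trans ((finrank_range_le_card _).trans ?_)
  simp

theorem rowWords_card_mul_le {d k : ℕ} (row : Fin k → Fin d) (q : Fin d → ℝ)
    (hq : ∀ i, 0 ≤ q i) (hq1 : ∑ i, q i = 1) :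
    ((rowWords row).card : ℝ) * ∏ j, q (row j) ≤ 1 := by
  have h1 : ((rowWords row).card : ℝ) * ∏ j, q (row j) = ∑ f ∈ rowWords row, ∏ j, q (f j) := by
    rw [← nsmul_eq_mul, Finset.sum_eq_card_nsmul]
    intro f hf
    simp only [rowWords, Finset.mem_image, Finset.mem_univ, true_and] at hf
    obtain ⟨π, rfl⟩ := hf
    exact Equiv.prod_comp π⁻¹ (fun j => q (row j))
  rw [h1]
  calc _ ≤ ∑ f : Fin k → Fin d, ∏ j, q (f j) :=
        Finset.sum_le_sum_of_subset_of_nonneg (Finset.subset_univ _)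
          (fun f _ _ => Finset.prod_nonneg fun j _ => hq _)
    _ = ∏ _j : Fin k, ∑ i, q i := by rw [Finset.prod_univ_sum]; simp
    _ ≤ 1 := by simp [hq1]

/-! ### Weights -/

theorem prod_initial {d : ℕ} (r : Fin d → ℝ) (hr : Antitone r) (hr0 : ∀ i, 0 ≤ r i)
    (s s0 : Finset (Fin d)) (hcard : s.card = s0.card)
    (hlow : ∀ a ∈ s0, ∀ b, b ≤ a → b ∈ s0) : ∏ a ∈ s, r a ≤ ∏ a ∈ s0, r a := by
  classical
  rw [← Finset.prod_inter_mul_prod_sdiff s s0, ← Finset.prod_inter_mul_prod_sdiff s0 s,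
    Finset.inter_comm s0 s]
  refine mul_le_mul_of_nonneg_left ?_ (Finset.prod_nonneg fun i _ => hr0 i)
  have hc : (s \ s0).card = (s0 \ s).card := Finset.card_sdiff_comm hcard
  let e := Finset.equivOfCardEq hc
  rw [← Finset.prod_coe_sort (s \ s0), ← Finset.prod_coe_sort (s0 \ s),
    ← Equiv.prod_comp e]
  refine Finset.prod_le_prod (fun i _ => hr0 _) fun i _ => hr ?_
  by_contra hlt
  push Not at hlt
  have h1 := Finset.mem_sdiff.mp (e i).2
  have h2 := Finset.mem_sdiff.mp i.2
  exact h2.2 (hlow _ h1.1 _ hlt.le)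

theorem prod_weight_le {d k : ℕ} (row : Fin k → Fin d) (col : Fin k → ℕ)
    (hinj : ∀ j j', row j = row j' → col j = col j' → j = j')
    (hdown : ∀ j, ∀ m : Fin d, m < row j → ∃ j', row j' = m ∧ col j' = col j)
    (r : Fin d → ℝ) (hr : Antitone r) (hr0 : ∀ i, 0 ≤ r i) (v : Fin k → Fin d)
    (hv : ∀ b b', b ≠ b' → col b = col b' → v b ≠ v b') :
    ∏ j, r (v j) ≤ ∏ j, r (row j) := by
  classical
  rw [← Finset.prod_fiberwise_of_maps_to (s := univ) (t := univ.image col) (g := col)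
      (fun j hj => Finset.mem_image_of_mem _ hj) (fun j => r (v j)),
    ← Finset.prod_fiberwise_of_maps_to (s := univ) (t := univ.image col) (g := col)
      (fun j hj => Finset.mem_image_of_mem _ hj) (fun j => r (row j))]
  refine Finset.prod_le_prod (fun c _ => Finset.prod_nonneg fun j _ => hr0 _) fun c _ => ?_
  have i1 : Set.InjOn v (univ.filter fun j => col j = c : Finset (Fin k)) := by
    intro a ha b hb hab
    simp only [Finset.coe_filter, Finset.mem_univ, true_and, Set.mem_ofPred_eq] at ha hb
    by_contra hne
    exact hv a b hne (ha.trans hb.symm) hab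
  have i2 : Set.InjOn row (univ.filter fun j => col j = c : Finset (Fin k)) := by
    intro a ha b hb hab
    simp only [Finset.coe_filter, Finset.mem_univ, true_and, Set.mem_ofPred_eq] at ha hb
    exact hinj a b hab (ha.trans hb.symm)
  rw [← Finset.prod_image (f := r) i1, ← Finset.prod_image (f := r) i2]
  refine prod_initial r hr hr0 _ _ ?_ ?_
  · rw [Finset.card_image_of_injOn i1, Finset.card_image_of_injOn i2]
  · intro a ha b hb
    simp only [Finset.mem_image, Finset.mem_filter, Finset.mem_univ, true_and] at ha ⊢
    obtain ⟨j, hj, rfl⟩ := ha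
    rcases hb.eq_or_lt with h | h
    · exact ⟨j, hj, h.symm⟩
    · obtain ⟨j', h1, h2⟩ := hdown j b h
      exact ⟨j', h2.trans hj, h1⟩

theorem colOp_vanish {d k : ℕ} (col : Fin k → ℕ) (z : (Fin k → Fin d) → ℂ) (v : Fin k → Fin d)
    (b b' : Fin k) (hb : b ≠ b') (hc : col b = col b') (hv : v b = v b') : colOp col z v = 0 := by
  have hvs : ∀ j, v (Equiv.swap b b' j) = v j := by
    intro j
    by_cases h1 : j = b
    · subst h1; simp [hv]
    · by_cases h2 : j = b'
      · subst h2; simp [hv]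
      · rw [Equiv.swap_apply_of_ne_of_ne h1 h2]
  have hcs : ∀ j, col (Equiv.swap b b' j) = col j := by
    intro j
    by_cases h1 : j = b
    · subst h1; simp [hc]
    · by_cases h2 : j = b'
      · subst h2; simp [hc]
      · rw [Equiv.swap_apply_of_ne_of_ne h1 h2]
  rw [colOp_apply]
  refine Finset.sum_involution (fun σ _ => Equiv.swap b b' * σ) ?_ ?_ ?_ ?_
  · intro σ _
    have : v ∘ ⇑(Equiv.swap b b' * σ) = v ∘ ⇑σ := by funext j; exact hvs (σ j)
    rw [this, Equiv.Perm.sign_mul, Equiv.Perm.sign_swap hb]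
    simp
  · intro σ _ _ h
    have : Equiv.swap b b' = 1 := by simpa using h
    have h2 := congrArg (fun e : Equiv.Perm (Fin k) => e b) this
    simp at h2
    exact hb h2.symm
  · intro σ hσ
    simp only [Finset.mem_filter, Finset.mem_univ, true_and] at hσ ⊢
    intro j
    rw [Equiv.Perm.mul_apply, hcs, hσ]
  · intro σ _
    simp [← mul_assoc]

/-! ### Tableaux -/

theorem tableau_facts {d k : ℕ} (lam : Fin d → Fin (k + 1)) (hlam : Antitone fun i => (lam i : ℕ))
    (t : Fin k → ℕ × ℕ) (ht : Set.BijOn t Set.univ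
      ↑(youngCells d k (fun i => if h : i < d then (lam ⟨i, h⟩ : ℕ) else 0))) :
    ∃ row : Fin k → Fin d, (∀ j, (row j : ℕ) = (t j).1) ∧
      (∀ j j', row j = row j' → (t j).2 = (t j').2 → j = j') ∧
      (∀ j, ∀ m : Fin d, m < row j → ∃ j', row j' = m ∧ (t j').2 = (t j).2) ∧
      (∀ i, (univ.filter fun j => row j = i).card = (lam i : ℕ)) := by
  have hmem : ∀ c, c ∈ youngCells d k (fun i => if h : i < d then (lam ⟨i, h⟩ : ℕ) else 0) ↔
      ∃ h : c.1 < d, c.2 < lam ⟨c.1, h⟩ := by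
    intro c
    simp only [youngCells, Finset.mem_filter, Finset.mem_product, Finset.mem_range]
    constructor
    · rintro ⟨⟨h1, _⟩, h3⟩
      exact ⟨h1, by simpa [h1] using h3⟩
    · rintro ⟨h1, h2⟩
      refine ⟨⟨h1, ?_⟩, by simpa [h1] using h2⟩
      have := (lam ⟨c.1, h1⟩).2
      omega
  have htm : ∀ j, ∃ h : (t j).1 < d, (t j).2 < lam ⟨(t j).1, h⟩ := fun j =>
    (hmem _).mp (Finset.mem_coe.mp (ht.mapsTo (Set.mem_univ j)))
  have hsurj : ∀ c : ℕ × ℕ, (∃ h : c.1 < d, c.2 < lam ⟨c.1, h⟩) → ∃ j, t j = c := by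
    intro c hc
    obtain ⟨j, _, hj⟩ := ht.surjOn (Finset.mem_coe.mpr ((hmem c).mpr hc))
    exact ⟨j, hj⟩
  have hinj : Function.Injective t := Set.injOn_univ.mp ht.injOn
  refine ⟨fun j => ⟨(t j).1, (htm j).1⟩, fun j => rfl, ?_, ?_, ?_⟩
  · intro j j' h1 h2
    exact hinj (Prod.ext (by simpa using h1) h2)
  · intro j m hm
    obtain ⟨h, h'⟩ := htm j
    obtain ⟨j', hj'⟩ := hsurj (m, (t j).2) ⟨m.2, lt_of_lt_of_le h' (hlam hm.le)⟩
    exact ⟨j', by simp [hj'], by simp [hj']⟩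
  · intro i
    rw [← Finset.card_range (lam i : ℕ)]
    refine Finset.card_bij (fun j _ => (t j).2) ?_ ?_ ?_
    · intro j hj
      simp only [Finset.mem_filter, Finset.mem_univ, true_and] at hj
      obtain ⟨h, h'⟩ := htm j
      rw [← hj]
      simpa using h'
    · intro j hj j' hj' h
      simp only [Finset.mem_filter, Finset.mem_univ, true_and] at hj hj'
      have := hj.trans hj'.symm
      exact hinj (Prod.ext (by simpa using this) h)
    · intro c hc
      obtain ⟨j, hj⟩ := hsurj (i, c) ⟨i.2, by simpa using hc⟩
      exact ⟨j, by simp [hj], by simp [hj]⟩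

theorem isotypic_le_orbit {d k : ℕ} (lam : Fin d → Fin (k + 1))
    (t : Fin k → ℕ × ℕ) (ht : Set.BijOn t Set.univ
      ↑(youngCells d k (fun i => if h : i < d then (lam ⟨i, h⟩ : ℕ) else 0)))
    (row : Fin k → Fin d) (hrow : ∀ j, (row j : ℕ) = (t j).1) :
    isotypic d k (fun i => if h : i < d then (lam ⟨i, h⟩ : ℕ) else 0) ≤
      Submodule.span ℂ {x | ∃ (π : Equiv.Perm (Fin k)) (v : (Fin k → Fin d) → ℂ),
        x = act π (colOp (fun j => (t j).2) (rowOp row v))} := by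
  refine Submodule.span_le.mpr ?_
  rintro _ ⟨t', ht', π, v, rfl⟩
  have hex : ∀ j, ∃ j', t j' = t' j := by
    intro j
    obtain ⟨j', _, h⟩ := ht.surjOn (ht'.mapsTo (Set.mem_univ j))
    exact ⟨j', h⟩
  choose e0 he0 using hex
  have hinj' : Function.Injective t' := Set.injOn_univ.mp ht'.injOn
  have he0inj : Function.Injective e0 := by
    intro a b hab
    apply hinj'
    rw [← he0, ← he0, hab]
  let e : Equiv.Perm (Fin k) := Equiv.ofBijective e0 (Finite.injective_iff_bijective.mp he0inj)
  have he : ∀ j, t (e j) = t' j := he0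
  have hcol : (fun j => (t' j).2) = (fun j => (t j).2) ∘ e := by
    funext j; simp [he]
  refine Submodule.subset_span ⟨π * e⁻¹, act e v, ?_⟩
  rw [permMat_mulVec, youngSymMat_mulVec t' (row ∘ e) (fun j => by simp [hrow, he]), hcol,
    colOp_conj, rowOp_conj, act_mul, act_mul]
  have h1 : ∀ z : (Fin k → Fin d) → ℂ, act (e * e⁻¹) z = z := by
    intro z
    rw [mul_inv_cancel]
    rfl
  rw [h1]

theorem isotypic_weight {d k : ℕ} (lam : Fin d → Fin (k + 1))
    (hlam : Antitone fun i => (lam i : ℕ))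
    (r : Fin d → ℝ) (hr : Antitone r) (hr0 : ∀ i, 0 ≤ r i) (R : ℝ)
    (hR : ∀ row : Fin k → Fin d, (∀ i, (univ.filter fun j => row j = i).card = (lam i : ℕ)) →
      ∏ j, r (row j) = R)
    (x : (Fin k → Fin d) → ℂ)
    (hx : x ∈ isotypic d k (fun i => if h : i < d then (lam ⟨i, h⟩ : ℕ) else 0))
    (v : Fin k → Fin d) (hv : R < ∏ j, r (v j)) : x v = 0 := by
  have hle : isotypic d k (fun i => if h : i < d then (lam ⟨i, h⟩ : ℕ) else 0) ≤
      LinearMap.ker (LinearMap.proj v : ((Fin k → Fin d) → ℂ) →ₗ[ℂ] ℂ) := by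
    refine Submodule.span_le.mpr ?_
    rintro _ ⟨t, ht, π, y, rfl⟩
    obtain ⟨row, hrow, hinj, hdown, hcard⟩ := tableau_facts lam hlam t ht
    change ((permMat d k π).mulVec ((youngSymMat d k t).mulVec y)) v = 0
    rw [permMat_mulVec_apply, youngSymMat_mulVec t row hrow]
    by_contra hne
    have hvi : ∀ b b', b ≠ b' → (t b).2 = (t b').2 → (v ∘ π) b ≠ (v ∘ π) b' := by
      intro b b' hb hc heq
      exact hne (colOp_vanish _ _ _ b b' hb hc heq)
    have := prod_weight_le row (fun j => (t j).2) hinj hdown r hr hr0 (v ∘ π) hvi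
    rw [hR row hcard] at this
    have h2 : ∏ j, r ((v ∘ π) j) = ∏ j, r (v j) := Equiv.prod_comp π (fun j => r (v j))
    rw [h2] at this
    linarith
  exact hle hx

/-! ### Tensor powers -/

theorem tensorPow_mul {d k : ℕ} (A B : Matrix (Fin d) (Fin d) ℂ) :
    tensorPow d k (A * B) = tensorPow d k A * tensorPow d k B := by
  ext v w
  simp only [tensorPow, Matrix.of_apply, Matrix.mul_apply]
  rw [Finset.prod_univ_sum]
  simp [Finset.prod_mul_distrib]

theorem tensorPow_diagonal {d k : ℕ} (a : Fin d → ℂ) :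
    tensorPow d k (Matrix.diagonal a) = Matrix.diagonal fun v => ∏ j, a (v j) := by
  ext v w
  simp only [tensorPow, Matrix.of_apply]
  by_cases h : v = w
  · subst h; simp
  · rw [Matrix.diagonal_apply_ne _ h]
    obtain ⟨j, hj⟩ := Function.ne_iff.mp h
    exact Finset.prod_eq_zero (Finset.mem_univ j) (Matrix.diagonal_apply_ne _ hj)

theorem tensorPow_one {d k : ℕ} : tensorPow d k (1 : Matrix (Fin d) (Fin d) ℂ) = 1 := by
  rw [← Matrix.diagonal_one, tensorPow_diagonal]
  simp

theorem tensorPow_conjTranspose {d k : ℕ} (A : Matrix (Fin d) (Fin d) ℂ) :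
    (tensorPow d k A)ᴴ = tensorPow d k Aᴴ := by
  ext v w
  simp [tensorPow, Matrix.conjTranspose_apply]

theorem tensorPow_permMat {d k : ℕ} (A : Matrix (Fin d) (Fin d) ℂ) (π : Equiv.Perm (Fin k)) :
    tensorPow d k A * permMat d k π = permMat d k π * tensorPow d k A := by
  apply Matrix.ext_of_mulVec_single
  intro w
  rw [← Matrix.mulVec_mulVec, ← Matrix.mulVec_mulVec]
  ext u
  rw [permMat_mulVec_apply]
  have : (permMat d k π).mulVec (Pi.single w 1) = Pi.single (w ∘ ⇑π⁻¹) 1 := by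
    ext z
    rw [permMat_mulVec_apply, Pi.single_apply, Pi.single_apply]
    congr 1
    apply propext
    constructor
    · intro h
      funext j
      have := congrFun h (π⁻¹ j)
      simpa using this
    · intro h
      funext j
      have := congrFun h (π j)
      simpa using this
  rw [this, Matrix.mulVec_single_one, Matrix.mulVec_single_one]
  simp only [Matrix.col_apply, tensorPow, Matrix.of_apply]
  rw [← Equiv.prod_comp π]
  simp

theorem tensorPow_youngSymMat {d k : ℕ} (A : Matrix (Fin d) (Fin d) ℂ) (t : Fin k → ℕ × ℕ) :
    tensorPow d k A * youngSymMat d k t = youngSymMat d k t * tensorPow d k A := by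
  have h1 : Commute (tensorPow d k A) (∑ π ∈ univ.filter
      (fun π : Equiv.Perm (Fin k) => ∀ j, (t (π j)).2 = (t j).2),
      (((Equiv.Perm.sign π : ℤ) : ℂ) • permMat d k π)) :=
    Commute.sum_right _ _ _ fun π _ => Commute.smul_right (tensorPow_permMat A π) _
  have h2 : Commute (tensorPow d k A) (∑ π ∈ univ.filter
      (fun π : Equiv.Perm (Fin k) => ∀ j, (t (π j)).1 = (t j).1), permMat d k π) :=
    Commute.sum_right _ _ _ fun π _ => tensorPow_permMat A π
  exact h1.mul_right h2

theorem isotypic_tensorPow {d k : ℕ} (A : Matrix (Fin d) (Fin d) ℂ) (lam : ℕ → ℕ)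
    (x : (Fin k → Fin d) → ℂ) (hx : x ∈ isotypic d k lam) :
    (tensorPow d k A).mulVec x ∈ isotypic d k lam := by
  have : isotypic d k lam ≤ (isotypic d k lam).comap (tensorPow d k A).mulVecLin := by
    refine Submodule.span_le.mpr ?_
    rintro _ ⟨t, ht, π, y, rfl⟩
    refine Submodule.subset_span ⟨t, ht, π, (tensorPow d k A).mulVec y, ?_⟩
    simp only [Matrix.mulVecLin_apply, Matrix.mulVec_mulVec]
    rw [← mul_assoc, tensorPow_permMat, mul_assoc, tensorPow_youngSymMat]
  exact this hx

/-! ### Trace bounds -/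

theorem trace_proj_re {n : Type*} [Fintype n] [DecidableEq n] (P : Matrix n n ℂ)
    (hP : P * P = P) (W : Submodule ℂ (n → ℂ)) (hW : LinearMap.range P.mulVecLin ≤ W) :
    ∑ v, (P v v).re ≤ (Module.finrank ℂ W : ℝ) := by
  have hid : IsIdempotentElem P.mulVecLin := by
    change P.mulVecLin * P.mulVecLin = P.mulVecLin
    rw [Module.End.mul_eq_comp, ← Matrix.mulVecLin_mul, hP]
  have h1 := (LinearMap.IsIdempotentElem.isProj_range _ hid).trace
  have h2 : LinearMap.trace ℂ (n → ℂ) P.mulVecLin = P.trace := by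
    rw [← Matrix.toLin'_apply', Matrix.trace_toLin'_eq]
  have h3 : ∑ v, (P v v).re = (Module.finrank ℂ (LinearMap.range P.mulVecLin) : ℝ) := by
    rw [h2] at h1
    have := congrArg Complex.re h1
    simpa [Matrix.trace] using this
  rw [h3]
  exact_mod_cast Submodule.finrank_mono hW

theorem diag_proj_nonneg {n : Type*} [Fintype n] [DecidableEq n] (P : Matrix n n ℂ)
    (hP : P * P = P) (hH : P.IsHermitian) (v : n) : 0 ≤ (P v v).re := by
  have : P v v = ∑ u, star (P u v) * P u v := by
    conv_lhs => rw [← hP, ← hH.eq]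
    nth_rewrite 2 [hH.eq]
    simp [Matrix.mul_apply, Matrix.conjTranspose_apply]
  rw [this, Complex.re_sum]
  refine Finset.sum_nonneg fun u _ => ?_
  simp [Complex.mul_re]
  nlinarith [mul_self_nonneg (P u v).re, mul_self_nonneg (P u v).im]

theorem single_bound {d k : ℕ} (hk : 0 < k) (lam : Fin d → Fin (k + 1))
    (hlam : Antitone fun i => (lam i : ℕ)) (hsum : ∑ i, (lam i : ℕ) = k)
    (r : Fin d → ℝ) (hr : Antitone r) (hr0 : ∀ i, 0 ≤ r i)
    (P : Matrix (Fin k → Fin d) (Fin k → Fin d) ℂ) (hP : P * P = P) (hH : P.IsHermitian)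
    (hW : LinearMap.range P.mulVecLin ≤
      isotypic d k (fun i => if h : i < d then (lam ⟨i, h⟩ : ℕ) else 0)) :
    ∑ v, (P v v).re * ∏ j, r (v j) ≤ (k + 1) ^ (d * (d - 1) / 2) *
      Real.exp (-(k : ℝ) * ∑ i : Fin d, (if (lam i : ℕ) = 0 then 0 else
          ((lam i : ℝ) / k) * (Real.log ((lam i : ℝ) / k) - Real.log (r i)))) := by
  have hk' : (0 : ℝ) < k := by exact_mod_cast hk
  have hpow : ∀ (g : Fin d → ℝ) (row : Fin k → Fin d),
      (∀ i, (univ.filter fun j => row j = i).card = (lam i : ℕ)) →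
      ∏ j, g (row j) = ∏ i, g i ^ (lam i : ℕ) := by
    intro g row hcard
    rw [← Finset.prod_fiberwise univ row]
    refine Finset.prod_congr rfl fun c _ => ?_
    rw [← hcard c, Finset.prod_eq_pow_card]
    intro j hj
    simp only [Finset.mem_filter, Finset.mem_univ, true_and] at hj
    rw [hj]
  set R := ∏ i, r i ^ (lam i : ℕ) with hRdef
  have hR0 : 0 ≤ R := Finset.prod_nonneg fun i _ => pow_nonneg (hr0 i) _
  have h1 : ∑ v, (P v v).re * ∏ j, r (v j) ≤ R * ∑ v, (P v v).re := by
    rw [Finset.mul_sum]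
    refine Finset.sum_le_sum fun v _ => ?_
    by_cases hv : R < ∏ j, r (v j)
    · have hz := isotypic_weight lam hlam r hr hr0 R (fun row hc => hpow r row hc)
        (P.mulVec (Pi.single v 1)) (hW ⟨Pi.single v 1, rfl⟩) v hv
      rw [Matrix.mulVec_single_one] at hz
      have hz' : P v v = 0 := hz
      simp [hz']
    · push Not at hv
      rw [mul_comm R]
      exact mul_le_mul_of_nonneg_left hv (diag_proj_nonneg P hP hH v)
  have h2 := trace_proj_re P hP _ hW
  refine h1.trans ((mul_le_mul_of_nonneg_left h2 hR0).trans ?_)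
  by_cases hT : ∃ t : Fin k → ℕ × ℕ, Set.BijOn t Set.univ
      ↑(youngCells d k (fun i => if h : i < d then (lam ⟨i, h⟩ : ℕ) else 0))
  · obtain ⟨t, ht⟩ := hT
    obtain ⟨row, hrow, hinj, hdown, hcard⟩ := tableau_facts lam hlam t ht
    have h3 := finrank_orbit_le row (fun j => (t j).2) _ (isotypic_le_orbit lam t ht row hrow)
    have h4 := finrank_young_le row (fun j => (t j).2) hdown
    have h5 : (Module.finrank ℂ
        (isotypic d k (fun i => if h : i < d then (lam ⟨i, h⟩ : ℕ) else 0)) : ℝ) ≤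
        (k + 1) ^ (d * (d - 1) / 2) * ((rowWords row).card : ℝ) := by
      have := h3.trans (Nat.mul_le_mul_right _ h4)
      exact_mod_cast this
    have hq1 : ∑ i, (lam i : ℝ) / k = 1 := by
      rw [← Finset.sum_div, div_eq_one_iff_eq hk'.ne']
      exact_mod_cast hsum
    have h6 := rowWords_card_mul_le row (fun i => (lam i : ℝ) / k)
      (fun i => by positivity) hq1
    rw [hpow (fun i => (lam i : ℝ) / k) row hcard] at h6
    have h7 : R ≤ (∏ i, ((lam i : ℝ) / k) ^ (lam i : ℕ)) *
        Real.exp (-(k : ℝ) * ∑ i : Fin d, (if (lam i : ℕ) = 0 then 0 else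
          ((lam i : ℝ) / k) * (Real.log ((lam i : ℝ) / k) - Real.log (r i)))) := by
      rw [Finset.mul_sum, Real.exp_sum, ← Finset.prod_mul_distrib]
      refine Finset.prod_le_prod (fun i _ => pow_nonneg (hr0 i) _) fun i _ => ?_
      by_cases hl : (lam i : ℕ) = 0
      · simp [hl]
      · rw [if_neg hl]
        have hlpos : (0 : ℝ) < (lam i : ℝ) := by exact_mod_cast Nat.pos_of_ne_zero hl
        rcases (hr0 i).eq_or_lt with h | h
        · rw [← h, zero_pow hl]; positivity
        · have hq : (0 : ℝ) < (lam i : ℝ) / k := by positivity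
          have : -(k : ℝ) * (((lam i : ℝ) / k) * (Real.log ((lam i : ℝ) / k) - Real.log (r i))) =
              (lam i : ℕ) * (Real.log (r i) - Real.log ((lam i : ℝ) / k)) := by
            field_simp; ring
          rw [this, Real.exp_nat_mul, Real.exp_sub, Real.exp_log h, Real.exp_log hq, ← mul_pow,
            mul_div_cancel₀ _ hq.ne']
    set X := Real.exp (-(k : ℝ) * ∑ i : Fin d, (if (lam i : ℕ) = 0 then 0 else
          ((lam i : ℝ) / k) * (Real.log ((lam i : ℝ) / k) - Real.log (r i)))) with hX
    have hX0 : 0 ≤ X := (Real.exp_pos _).le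
    set M : ℝ := ((k : ℝ) + 1) ^ (d * (d - 1) / 2) with hM
    have hM0 : 0 ≤ M := by positivity
    calc _ ≤ R * (M * ((rowWords row).card : ℝ)) := mul_le_mul_of_nonneg_left h5 hR0
      _ ≤ ((∏ i, ((lam i : ℝ) / k) ^ (lam i : ℕ)) * X) * (M * ((rowWords row).card : ℝ)) :=
          mul_le_mul_of_nonneg_right h7 (by positivity)
      _ = M * X * (((rowWords row).card : ℝ) * ∏ i, ((lam i : ℝ) / k) ^ (lam i : ℕ)) := by ring
      _ ≤ M * X * 1 := mul_le_mul_of_nonneg_left h6 (by positivity)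
      _ = M * X := mul_one _
  · have : isotypic d k (fun i => if h : i < d then (lam ⟨i, h⟩ : ℕ) else 0) = ⊥ := by
      unfold isotypic
      rw [Submodule.span_eq_bot]
      rintro _ ⟨t, ht, _⟩
      exact absurd ⟨t, ht⟩ hT
    rw [this]
    simp only [finrank_bot, Nat.cast_zero, mul_zero]
    positivity

theorem exists_diagonalization {d : ℕ} (ρ : Matrix (Fin d) (Fin d) ℂ) (hρ : ρ.IsHermitian)
    (r : Fin d → ℝ) (hr_spec : ∃ σ : Equiv.Perm (Fin d), ∀ i, r i = hρ.eigenvalues (σ i)) :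
    ∃ U : Matrix (Fin d) (Fin d) ℂ, U * Uᴴ = 1 ∧
      ρ = U * Matrix.diagonal (fun i => (r i : ℂ)) * Uᴴ := by
  obtain ⟨σ, hσ⟩ := hr_spec
  set V : Matrix (Fin d) (Fin d) ℂ := hρ.eigenvectorUnitary.1 with hV
  have hVV : V * Vᴴ = 1 := by
    have := (Matrix.mem_unitaryGroup_iff).mp hρ.eigenvectorUnitary.2
    simpa [Matrix.star_eq_conjTranspose] using this
  have hs : ρ = V * Matrix.diagonal (fun i => (hρ.eigenvalues i : ℂ)) * Vᴴ := by
    have := hρ.spectral_theorem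
    rw [Unitary.conjStarAlgAut_apply] at this
    exact this
  refine ⟨V.submatrix id σ, ?_, ?_⟩
  · rw [← hVV]
    ext a b
    simp only [Matrix.mul_apply, Matrix.conjTranspose_apply, Matrix.submatrix_apply, id]
    exact Equiv.sum_comp σ (fun i => V a i * star (V b i))
  · conv_lhs => rw [hs]
    ext a b
    rw [Matrix.mul_apply, Matrix.mul_apply]
    simp only [Matrix.mul_diagonal, Matrix.conjTranspose_apply, Matrix.submatrix_apply, id, hσ]
    exact (Equiv.sum_comp σ (fun i => V a i * (hρ.eigenvalues i : ℂ) * star (V b i))).symm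

theorem keyl_werner_single {d k : ℕ} (hk : 0 < k)
    (ρ : Matrix (Fin d) (Fin d) ℂ) (hρ : ρ.PosSemidef)
    (r : Fin d → ℝ) (hr : Antitone r)
    (hr_spec : ∃ σ : Equiv.Perm (Fin d), ∀ i, r i = hρ.1.eigenvalues (σ i))
    (lam : Fin d → Fin (k + 1))
    (hlam : Antitone fun i => (lam i : ℕ)) (hsum : ∑ i, (lam i : ℕ) = k)
    (P : Matrix (Fin k → Fin d) (Fin k → Fin d) ℂ) (hP : P * P = P) (hH : P.IsHermitian)
    (hW : LinearMap.range P.mulVecLin ≤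
      isotypic d k (fun i => if h : i < d then (lam ⟨i, h⟩ : ℕ) else 0)) :
    (P * tensorPow d k ρ).trace.re ≤ (k + 1) ^ (d * (d - 1) / 2) *
      Real.exp (-(k : ℝ) * ∑ i : Fin d, (if (lam i : ℕ) = 0 then 0 else
          ((lam i : ℝ) / k) * (Real.log ((lam i : ℝ) / k) - Real.log (r i)))) := by
  have hr0 : ∀ i, 0 ≤ r i := by
    obtain ⟨σ, hσ⟩ := hr_spec
    intro i
    rw [hσ]
    exact hρ.eigenvalues_nonneg _
  obtain ⟨U, hU, hρU⟩ := exists_diagonalization ρ hρ.1 r hr_spec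
  set T := tensorPow d k U with hT
  have hTT : T * Tᴴ = 1 := by
    rw [hT, tensorPow_conjTranspose, ← tensorPow_mul, hU, tensorPow_one]
  have hQ : (Tᴴ * P * T) * (Tᴴ * P * T) = Tᴴ * P * T := by
    calc _ = Tᴴ * P * (T * Tᴴ) * P * T := by simp only [mul_assoc]
      _ = Tᴴ * (P * P) * T := by rw [hTT]; simp only [mul_assoc, one_mul]
      _ = _ := by rw [hP]
  have hQH : (Tᴴ * P * T).IsHermitian := by
    unfold Matrix.IsHermitian
    rw [Matrix.conjTranspose_mul, Matrix.conjTranspose_mul, Matrix.conjTranspose_conjTranspose,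
      hH.eq, mul_assoc]
  have hQW : LinearMap.range (Tᴴ * P * T).mulVecLin ≤
      isotypic d k (fun i => if h : i < d then (lam ⟨i, h⟩ : ℕ) else 0) := by
    rintro _ ⟨y, rfl⟩
    rw [Matrix.mulVecLin_apply, ← Matrix.mulVec_mulVec, ← Matrix.mulVec_mulVec, hT,
      tensorPow_conjTranspose]
    exact isotypic_tensorPow _ _ _ (hW ⟨_, rfl⟩)
  have key := single_bound hk lam hlam hsum r hr hr0 (Tᴴ * P * T) hQ hQH hQW
  have htr : (P * tensorPow d k ρ).trace.re =
      ∑ v, ((Tᴴ * P * T) v v).re * ∏ j, r (v j) := by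
    rw [hρU, tensorPow_mul, tensorPow_mul, ← tensorPow_conjTranspose, ← hT, tensorPow_diagonal,
      ← mul_assoc, Matrix.trace_mul_comm, ← mul_assoc, ← mul_assoc, Matrix.trace, Complex.re_sum]
    refine Finset.sum_congr rfl fun v _ => ?_
    rw [Matrix.diag_apply, Matrix.mul_diagonal]
    have : (∏ j, (r (v j) : ℂ)) = ((∏ j, r (v j) : ℝ) : ℂ) := by push_cast; rfl
    rw [this, Complex.re_mul_ofReal]
  rw [htr]
  exact key

open scoped Classical

/-- Corollary of the Keyl–Werner estimate: if `S` is a closed set of probability vectors not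
containing the spectrum `r` of the density operator `ρ`, and `P_X` is the sum of the Schur–Weyl
projectors `P_lam` over partitions `lam ⊢ k` with `lam/k ∈ S`, then
`tr(P_X ρ^{⊗k}) ≤ (k+1)^{d(d+1)/2} exp(−k · min_{lam ⊢ k, lam/k ∈ S} D(lam/k ‖ r))`
(stated for any lower bound `mKL` of the relevant KL divergences, in particular the minimum). -/
theorem stmt_9 {d k : ℕ} (hk : 0 < k)
    (ρ : Matrix (Fin d) (Fin d) ℂ) (hρ : ρ.PosSemidef) (hρtr : ρ.trace = 1)
    (r : Fin d → ℝ) (hr_anti : Antitone r)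
    (hr_spec : ∃ σ : Equiv.Perm (Fin d), ∀ i, r i = hρ.1.eigenvalues (σ i))
    (S : Set (Fin d → ℝ)) (hSclosed : IsClosed S)
    (hSprob : ∀ p ∈ S, (∀ i, 0 ≤ p i) ∧ ∑ i, p i = 1) (hrS : r ∉ S)
    (P : (Fin d → Fin (k + 1)) → Matrix (Fin k → Fin d) (Fin k → Fin d) ℂ)
    (hP : ∀ lam : Fin d → Fin (k + 1),
      Antitone (fun i => (lam i : ℕ)) → (∑ i, (lam i : ℕ)) = k →
        P lam * P lam = P lam ∧ (P lam).IsHermitian ∧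
          LinearMap.range (P lam).mulVecLin =
            isotypic d k (fun i => if h : i < d then (lam ⟨i, h⟩ : ℕ) else 0))
    (mKL : ℝ)
    (hmKL : ∀ lam : Fin d → Fin (k + 1),
      Antitone (fun i => (lam i : ℕ)) → (∑ i, (lam i : ℕ)) = k →
        (fun i => (lam i : ℝ) / k) ∈ S →
        mKL ≤ ∑ i : Fin d, (if (lam i : ℕ) = 0 then 0 else
          ((lam i : ℝ) / k) * (Real.log ((lam i : ℝ) / k) - Real.log (r i)))) :
    ((∑ lam ∈ univ.filter (fun lam : Fin d → Fin (k + 1) =>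
        Antitone (fun i => (lam i : ℕ)) ∧ (∑ i, (lam i : ℕ)) = k ∧
          (fun i => (lam i : ℝ) / k) ∈ S), P lam) * tensorPow d k ρ).trace.re ≤
      (k + 1) ^ (d * (d + 1) / 2) * Real.exp (-(k : ℝ) * mKL) := by
  have hexp : d + d * (d - 1) / 2 = d * (d + 1) / 2 := by
    have h1 : d * (d + 1) = d * (d - 1) + d * 2 := by
      cases d with
      | zero => rfl
      | succ n => simp only [Nat.add_sub_cancel]; ring
    rw [h1, Nat.add_mul_div_right _ _ (by norm_num), add_comm]
  rw [Finset.sum_mul, Matrix.trace_sum, Complex.re_sum]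
  set X := Real.exp (-(k : ℝ) * mKL) with hX
  have hX0 : 0 ≤ X := (Real.exp_pos _).le
  have hbound : ∀ lam ∈ univ.filter (fun lam : Fin d → Fin (k + 1) =>
        Antitone (fun i => (lam i : ℕ)) ∧ (∑ i, (lam i : ℕ)) = k ∧
          (fun i => (lam i : ℝ) / k) ∈ S),
      ((P lam) * tensorPow d k ρ).trace.re ≤ (k + 1) ^ (d * (d - 1) / 2) * X := by
    intro lam hl
    simp only [Finset.mem_filter, Finset.mem_univ, true_and] at hl
    obtain ⟨h1, h2, h3⟩ := hl
    obtain ⟨p1, p2, p3⟩ := hP lam h1 h2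
    refine (keyl_werner_single hk ρ hρ r hr_anti hr_spec lam h1 h2 (P lam) p1 p2 p3.le).trans ?_
    refine mul_le_mul_of_nonneg_left (Real.exp_le_exp.mpr ?_) (by positivity)
    exact mul_le_mul_of_nonpos_left (hmKL lam h1 h2 h3) (by simp)
  refine (Finset.sum_le_card_nsmul _ _ _ hbound).trans ?_
  rw [nsmul_eq_mul, ← hexp, pow_add, ← mul_assoc, mul_assoc (((k : ℝ) + 1) ^ d), ← mul_assoc]
  refine mul_le_mul_of_nonneg_right (mul_le_mul_of_nonneg_right ?_ (by positivity)) hX0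
  refine (Nat.cast_le.mpr (Finset.card_le_univ _)).trans ?_
  simp

end
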